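/- arXiv:1104.2804 — 3 statements merged into one kernel-verified Lean document; each statement's English description precedes it below -/
import Mathlib

section
/- For all natural numbers n and k with k < n, two applications of the Collatz map send 3^k·2^(n−k) − 1 to 3^(k+1)·2^(n−k−1) − 1; that is, T^[2](3^k·2^(n−k) − 1) = 3^(k+1)·2^(n−k−1) − 1. -/
/-- The Collatz map: `T x = x / 2` if `x` is even, `3 * x + 1` if `x` is odd. -/
def T (x : ℕ) : ℕ := if x % 2 = 0 then x / 2 else 3 * x + 1

theorem T_two_mul (m : ℕ) : T (2 * m) = m := by
  simp [T]

theorem T_two_mul_add_one (m : ℕ) : T (2 * m + 1) = 2 * (3 * m + 2) := by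
  rw [T, if_neg (by omega)]
  ring

/-- In terms of `x + 1`: two steps from an odd `x` multiply `x + 1` by `3 / 2`, so they trade
one factor `2` of `x + 1` for a factor `3`. -/
theorem T_iterate_two_two_mul_add_one (m : ℕ) : T^[2] (2 * m + 1) = 3 * m + 2 := by
  rw [Function.iterate_succ_apply, Function.iterate_one, T_two_mul_add_one, T_two_mul]

theorem two_step_collatz (n k : ℕ) (hk : k < n) :
    T^[2] (3 ^ k * 2 ^ (n - k) - 1) = 3 ^ (k + 1) * 2 ^ (n - k - 1) - 1 := by
  obtain ⟨a, ha⟩ : ∃ a, 3 ^ k * 2 ^ (n - k - 1) = a + 1 :=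
    Nat.exists_eq_add_one_of_ne_zero (by positivity)
  have start_eq : 3 ^ k * 2 ^ (n - k) = 2 * (a + 1) := by
    rw [← ha, mul_left_comm, mul_pow_sub_one (Nat.sub_ne_zero_of_lt hk)]
  have end_eq : 3 ^ (k + 1) * 2 ^ (n - k - 1) = 3 * (a + 1) := by
    rw [pow_succ', mul_assoc, ha]
  calc T^[2] (3 ^ k * 2 ^ (n - k) - 1)
      = T^[2] (2 * a + 1) := by rw [start_eq]; rfl
    _ = 3 * a + 2 := T_iterate_two_two_mul_add_one a
    _ = 3 ^ (k + 1) * 2 ^ (n - k - 1) - 1 := by rw [end_eq]; rfl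
end

section
/- For every natural number n, the Mersenne number 2^n − 1 is sent to 3^n − 1 after exactly 2n applications of the Collatz map; that is, T^[2n](2^n − 1) = 3^n − 1. -/
-- At `b = 0`, truncated subtraction reduces the identity to the fixed point `T 0 = 0`.
theorem T_iterate_two_two_mul_sub_one (b : ℕ) : T^[2] (2 * b - 1) = 3 * b - 1 := by
  cases b with
  | zero => rfl
  | succ m =>
    calc T (T (2 * m + 1)) = T (2 * (3 * m + 2)) := by rw [T_two_mul_add_one]
      _ = 3 * m + 2 := T_two_mul _

theorem T_iterate_two_mul_mul_two_pow_sub_one (a n : ℕ) :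
    T^[2 * n] (a * 2 ^ n - 1) = a * 3 ^ n - 1 := by
  induction n generalizing a with
  | zero => simp
  | succ n ih =>
    calc T^[2 * (n + 1)] (a * 2 ^ (n + 1) - 1)
        = T^[2 * n] (T^[2] (2 * (a * 2 ^ n) - 1)) := by
          rw [mul_add_one, Function.iterate_add_apply, pow_succ', mul_left_comm]
      _ = T^[2 * n] (3 * a * 2 ^ n - 1) := by
          rw [T_iterate_two_two_mul_sub_one, mul_assoc]
      _ = 3 * a * 3 ^ n - 1 := ih (3 * a)
      _ = a * 3 ^ (n + 1) - 1 := by rw [pow_succ', mul_left_comm, mul_assoc]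

theorem mersenne_reaches_three_pow (n : ℕ) :
    T^[2 * n] (2 ^ n - 1) = 3 ^ n - 1 := by
  simpa only [one_mul] using T_iterate_two_mul_mul_two_pow_sub_one 1 n
end

section
/- For every natural number n ≥ 2 and every k ≤ 2n, the k-th iterate of the Collatz map at 2^n − 1 satisfies T^[k](2^n − 1) > 1; in particular the trajectory of 2^n − 1 does not reach 1 within its first 2n steps. -/
/-!
If `x + 1 = 2 * y`, then `x` is odd and two Collatz steps lead to `(3 * x + 1) / 2 = 3 * y - 1`:
they replace a factor `2` of `x + 1` by a factor `3`. When `2 ^ m ∣ x + 1` this can be done `m`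
times in a row, and the trajectory of `x` does not drop below `x` meanwhile.
-/

theorem T_of_even {x : ℕ} (hx : Even x) : T x = x / 2 :=
  if_pos (Nat.even_iff.mp hx)

theorem T_of_odd {x : ℕ} (hx : Odd x) : T x = 3 * x + 1 :=
  if_neg (Nat.mod_two_ne_zero.mpr (Nat.odd_iff.mp hx))

theorem T_iterate_two_of_odd {x : ℕ} (hx : Odd x) : T^[2] x = (3 * x + 1) / 2 := by
  have h_even : Even (3 * x + 1) := (Odd.mul (by decide) hx).add_one
  rw [Function.iterate_succ_apply, Function.iterate_one, T_of_odd hx, T_of_even h_even]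

theorem T_iterate_two_add_one {x y : ℕ} (h : x + 1 = 2 * y) : T^[2] x + 1 = 3 * y := by
  have hx : Odd x := by grind
  rw [T_iterate_two_of_odd hx]
  omega

theorem T_iterate_two_mul_add_one {x a j : ℕ} (h : x + 1 = 2 ^ j * a) :
    T^[2 * j] x + 1 = 3 ^ j * a := by
  induction j generalizing a with
  | zero => simpa using h
  | succ j ih =>
    have h_two_mul : T^[2 * j] x + 1 = 2 * (3 ^ j * a) := by
      rw [ih (h.trans (by ring : _ = 2 ^ j * (2 * a)))]
      ring
    rw [Nat.mul_succ, Nat.add_comm (2 * j), Function.iterate_add_apply,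
      T_iterate_two_add_one h_two_mul]
    ring

theorem le_T_iterate_two_mul {x j : ℕ} (h : 2 ^ j ∣ x + 1) : x ≤ T^[2 * j] x := by
  obtain ⟨a, ha⟩ := h
  have h_succ : x + 1 ≤ T^[2 * j] x + 1 := by
    rw [T_iterate_two_mul_add_one ha, ha]
    gcongr
    norm_num
  exact Nat.le_of_succ_le_succ h_succ

theorem odd_T_iterate_two_mul {x j : ℕ} (h : 2 ^ (j + 1) ∣ x + 1) : Odd (T^[2 * j] x) := by
  obtain ⟨a, ha⟩ := h
  have h_succ : T^[2 * j] x + 1 = 3 ^ j * (2 * a) :=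
    T_iterate_two_mul_add_one (by rw [ha, pow_succ, mul_assoc])
  have h_even : Even (T^[2 * j] x + 1) := h_succ ▸ (even_two_mul a).mul_left _
  simpa [Nat.even_add_one] using h_even

theorem mersenne_trajectory_stays_above_one_general {m x : ℕ} (h : 2 ^ m ∣ x + 1) {k : ℕ}
    (hk : k ≤ 2 * m) : x ≤ T^[k] x := by
  obtain ⟨j, rfl | rfl⟩ := k.even_or_odd'
  · exact le_T_iterate_two_mul ((pow_dvd_pow 2 (by omega)).trans h)
  · have h_dvd : 2 ^ (j + 1) ∣ x + 1 := (pow_dvd_pow 2 (by omega)).trans h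
    calc
      x ≤ T^[2 * j] x := le_T_iterate_two_mul ((pow_dvd_pow 2 j.le_succ).trans h_dvd)
      _ ≤ 3 * T^[2 * j] x + 1 := by omega
      _ = T^[2 * j + 1] x := by
        rw [Function.iterate_succ_apply', T_of_odd (odd_T_iterate_two_mul h_dvd)]

theorem mersenne_trajectory_stays_above_one (n : ℕ) (hn : 2 ≤ n) :
    ∀ k ≤ 2 * n, 1 < T^[k] (2 ^ n - 1) := by
  intro k hk
  have h_four_le : 2 ^ 2 ≤ 2 ^ n := Nat.pow_le_pow_right two_pos hn
  have h_dvd : 2 ^ n ∣ 2 ^ n - 1 + 1 := by rw [Nat.sub_add_cancel Nat.one_le_two_pow]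
  exact lt_of_lt_of_le (by omega) (mersenne_trajectory_stays_above_one_general h_dvd hk)
end
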